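/- Let t, t' be resource λμ-terms and T a sum in 2⟨λμʳ⟩. If t →_{ρʳ} t' + T (i.e. t reduces to the sum t' + T by contracting a ρʳ-redex), then m(t) ≥ m(t') in the multiset order; moreover there exist instances where equality holds, e.g. for names β ≠ η one has μγ.[α]μβ.[η]x →_{ρʳ} μγ.[η]x and m(μγ.[α]μβ.[η]x) = m(μγ.[η]x) (both equal to the empty multiset). -/

import Mathlib

/-!
A ρ-redex `μγ.[α]μβ.[η]t` merges two nested μ-abstractions into one. Renaming a name touches
neither bags nor μ-abstractions, so the step lowers `degMu` by exactly one, keeps the bag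
occurrences in bijection, and lowers the depth of each bag by one if the bag lies inside the
redex and by zero otherwise. Hence each entry `degMu - depth` of the measure stays the same or
decreases by one. Both facts propagate through contexts (`ctx_rho`); a bijection between two
multisets of naturals that never increases an entry yields the weak multiset order
(`mlt_or_eq_of_rel`).
-/

set_option maxHeartbeats 1000000

namespace RLMu

inductive Rt : Type where
  | var : ℕ → Rt
  | lam : ℕ → Rt → Rt
  | app : Rt → List Rt → Rt
  | mu  : ℕ → ℕ → Rt → Rt

noncomputable instance : DecidableEq Rt := Classical.decEq _

namespace Rt

mutual
  def renameN (a b : ℕ) : Rt → Rt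
    | var y => var y
    | lam y t => lam y (renameN a b t)
    | app t ts => app (renameN a b t) (renameNBag a b ts)
    | mu g e t =>
        if g = b then mu g e t
        else mu g (if e = b then a else e) (renameN a b t)
  def renameNBag (a b : ℕ) : List Rt → List Rt
    | [] => []
    | t :: ts => renameN a b t :: renameNBag a b ts
end

def modifyIdx (t : Rt) : List (List Rt) → ℕ → List (List Rt)
  | [], _ => []
  | l :: ls, 0 => (t :: l) :: ls
  | l :: ls, i + 1 => l :: modifyIdx t ls i

def splits (n : ℕ) : List Rt → Multiset (List (List Rt))
  | [] => {List.replicate n []}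
  | t :: ts => (splits n ts).bind fun ls => (Multiset.range n).map fun i => modifyIdx t ls i

def splits2 : List Rt → Multiset (List Rt × List Rt)
  | [] => {([], [])}
  | t :: ts => (splits2 ts).bind fun p => {(t :: p.1, p.2), (p.1, t :: p.2)}

-- the (quantitative) linear substitution t⟨[ū]/x⟩ : the sum over all ways of
-- assigning the elements of the bag bijectively to the free occurrences of x in t
mutual
  def linSub (x : ℕ) : Rt → List Rt → Multiset Rt
    | var y, bag =>
        if y = x then (match bag with | [u] => ({u} : Multiset Rt) | _ => 0)
        else (match bag with | [] => ({var y} : Multiset Rt) | _ => 0)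
    | lam y t, bag =>
        if y = x then (match bag with | [] => ({lam y t} : Multiset Rt) | _ => 0)
        else (linSub x t bag).map (lam y)
    | mu g e t, bag => (linSub x t bag).map (mu g e)
    | app t ts, bag =>
        (splits (ts.length + 1) bag).bind fun ls =>
          match ls with
          | l0 :: rest =>
              (linSub x t l0).bind fun s =>
                (linSubBag x ts rest).map fun ss => app s ss
          | [] => 0
  def linSubBag (x : ℕ) : List Rt → List (List Rt) → Multiset (List Rt)
    | [], [] => {([] : List Rt)}
    | [], _ :: _ => 0
    | _ :: _, [] => 0
    | t :: ts, l :: ls =>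
        (linSub x t l).bind fun s => (linSubBag x ts ls).map fun ss => s :: ss
end

end Rt

end RLMu

namespace RLMu
namespace Rt

-- the (quantitative) linear named application ⟨t⟩_a[ū]
mutual
  def nApp (a : ℕ) : Rt → List Rt → Multiset Rt
    | var y, bag => (match bag with | [] => ({var y} : Multiset Rt) | _ => 0)
    | lam y t, bag => (nApp a t bag).map (lam y)
    | mu g e t, bag =>
        if g = a then (match bag with | [] => ({mu g e t} : Multiset Rt) | _ => 0)
        else if e = a then
          (splits2 bag).bind fun p =>
            (nApp a t p.1).map fun s => mu g e (app s p.2)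
        else (nApp a t bag).map (mu g e)
    | app t ts, bag =>
        (splits (ts.length + 1) bag).bind fun ls =>
          match ls with
          | l0 :: rest =>
              (nApp a t l0).bind fun s =>
                (nAppBag a ts rest).map fun ss => app s ss
          | [] => 0
  def nAppBag (a : ℕ) : List Rt → List (List Rt) → Multiset (List Rt)
    | [], [] => {([] : List Rt)}
    | [], _ :: _ => 0
    | _ :: _, [] => 0
    | t :: ts, l :: ls =>
        (nApp a t l).bind fun s => (nAppBag a ts ls).map fun ss => s :: ss
end

mutual
  def degName (a : ℕ) : Rt → ℕ
    | var _ => 0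
    | lam _ t => degName a t
    | app t ts => degName a t + degNameBag a ts
    | mu g e t => if g = a then 0 else (if e = a then 1 else 0) + degName a t
  def degNameBag (a : ℕ) : List Rt → ℕ
    | [] => 0
    | t :: ts => degName a t + degNameBag a ts
end

/-- the linear named application `⟨[e]t⟩_g [ū]` on the named term `[e]t`, a named
term `[e']t'` being represented by the pair `(e', t')` -/
def nAppNamed (g e : ℕ) (t : Rt) (bag : List Rt) : Multiset (ℕ × Rt) :=
  if e = g then
    (splits2 bag).bind fun p => (nApp g t p.1).map fun s => (g, app s p.2)
  else (nApp g t bag).map fun s => (e, s)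

/-- `μa.⟨[b]t⟩_a [ū]`, the reduct of the μ-redex `(μa.[b]t)[ū]` -/
def muRedex (a b : ℕ) (t : Rt) (bag : List Rt) : Multiset Rt :=
  if b = a then
    (splits2 bag).bind fun p => (nApp a t p.1).map fun s => mu a a (app s p.2)
  else (nApp a t bag).map (mu a b)

end Rt

open Rt

/-- base step of the λʳ-reduction -/
inductive BaseLam : Rt → Multiset Rt → Prop
  | step (x : ℕ) (t : Rt) (bag : List Rt) :
      BaseLam (.app (.lam x t) bag) (linSub x t bag)

/-- base step of the μʳ-reduction -/
inductive BaseMu : Rt → Multiset Rt → Prop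
  | step (a b : ℕ) (t : Rt) (bag : List Rt) :
      BaseMu (.app (.mu a b t) bag) (muRedex a b t bag)

/-- base step of the ρʳ-reduction -/
inductive BaseRho : Rt → Multiset Rt → Prop
  | step (g a b e : ℕ) (t : Rt) :
      BaseRho (.mu g a (.mu b e t))
        ({.mu g (if e = b then a else e) (renameN a b t)} : Multiset Rt)

/-- closure of a base reduction under single-hole resource contexts -/
inductive Ctx (B : Rt → Multiset Rt → Prop) : Rt → Multiset Rt → Prop
  | base {t S} : B t S → Ctx B t S
  | lam (x : ℕ) {t S} : Ctx B t S → Ctx B (.lam x t) (S.map (.lam x))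
  | mu (a b : ℕ) {t S} : Ctx B t S → Ctx B (.mu a b t) (S.map (.mu a b))
  | appL (bag : List Rt) {t S} :
      Ctx B t S → Ctx B (.app t bag) (S.map fun s => .app s bag)
  | appR (t : Rt) (l r : List Rt) {u S} :
      Ctx B u S → Ctx B (.app t (l ++ u :: r)) (S.map fun s => .app t (l ++ s :: r))

/-- the quantitative resource reduction →ᵣ⁺ from terms to sums in ℕ⟨λμʳ⟩ -/
def QStep : Rt → Multiset Rt → Prop :=
  Ctx fun t S => BaseLam t S ∨ BaseMu t S ∨ BaseRho t S

/-- the quantitative resource reduction →ᵣ⁺ on sums of ℕ⟨λμʳ⟩ -/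
inductive QRed : Multiset Rt → Multiset Rt → Prop
  | mk {t : Rt} {S R : Multiset Rt} : QStep t S → QRed (t ::ₘ R) (S + R)

/-- the qualitative version (with idempotent sum, i.e. with sums in 2⟨λμʳ⟩)
of the contextual closure of a base reduction: from terms to sums in 2⟨λμʳ⟩ -/
noncomputable def StepOf (B : Rt → Multiset Rt → Prop) (t : Rt) (T : Finset Rt) : Prop :=
  ∃ S : Multiset Rt, Ctx B t S ∧ T = S.toFinset

/-- the reduction →_{λʳ} : contextual closure of the λʳ base step, in 2⟨λμʳ⟩ -/
noncomputable def StepLam : Rt → Finset Rt → Prop := StepOf BaseLam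
/-- the reduction →_{μʳ} : contextual closure of the μʳ base step, in 2⟨λμʳ⟩ -/
noncomputable def StepMu : Rt → Finset Rt → Prop := StepOf BaseMu
/-- the reduction →_{ρʳ} : contextual closure of the ρʳ base step, in 2⟨λμʳ⟩ -/
noncomputable def StepRho : Rt → Finset Rt → Prop := StepOf BaseRho

/-- the resource reduction →ᵣ from terms to sums in 2⟨λμʳ⟩ -/
noncomputable def RStep (t : Rt) (T : Finset Rt) : Prop :=
  ∃ S : Multiset Rt, QStep t S ∧ T = S.toFinset

/-- the resource reduction →ᵣ on sums in 2⟨λμʳ⟩ -/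
inductive FRed : Finset Rt → Finset Rt → Prop
  | mk {t : Rt} {R S : Finset Rt} : RStep t S → t ∉ R → FRed (insert t R) (S ∪ R)

/-- a resource term is →ᵣ-normal -/
def NormalTm (t : Rt) : Prop := ∀ S : Multiset Rt, ¬ QStep t S

end RLMu

namespace RLMu
namespace Rt

-- number of μ-abstractions occurring in a term
mutual
  def degMu : Rt → ℕ
    | var _ => 0
    | lam _ t => degMu t
    | mu _ _ t => degMu t + 1
    | app t ts => degMu t + degMuBag ts
  def degMuBag : List Rt → ℕ
    | [] => 0
    | t :: ts => degMu t + degMuBag ts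
end

-- the multiset of the depths (number of enclosing named subterms) of the
-- occurrences of bags in a term
mutual
  def depths : Rt → Multiset ℕ
    | var _ => 0
    | lam _ t => depths t
    | mu _ _ t => (depths t).map (· + 1)
    | app t ts => (0 : ℕ) ::ₘ (depths t + depthsBag ts)
  def depthsBag : List Rt → Multiset ℕ
    | [] => 0
    | t :: ts => depths t + depthsBag ts
end

/-- the multiset measure `m(t)` : the multiset of `deg_μ(t) - d_t(b)` over the
occurrences `b` of bags in `t` -/
def msr (t : Rt) : Multiset ℕ := (depths t).map fun d => degMu t - d

end Rt

/-- the (Dershowitz–Manna) multiset order on finite multisets of naturals -/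
def MLT (M N : Multiset ℕ) : Prop :=
  ∃ X Y Z : Multiset ℕ, X ≠ 0 ∧ N = Z + X ∧ M = Z + Y ∧ ∀ y ∈ Y, ∃ x ∈ X, y < x

/-- the measure `SN(t) = (m(t), deg_μ(t))` -/
def SNm (t : Rt) : Multiset ℕ × ℕ := (Rt.msr t, Rt.degMu t)

/-- lexicographic order on `!ℕ × ℕ` (multiset order on the first component) -/
def SNlt : Multiset ℕ × ℕ → Multiset ℕ × ℕ → Prop := Prod.Lex MLT (· < ·)

end RLMu

namespace RLMu

open Rt

mutual
  theorem degMu_renameN (a b : ℕ) : ∀ t, degMu (renameN a b t) = degMu t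
    | .var _ => by simp [renameN]
    | .lam _ t => by simp [renameN, degMu, degMu_renameN a b t]
    | .app t ts => by
        simp [renameN, degMu, degMu_renameN a b t, degMuBag_renameNBag a b ts]
    | .mu g e t => by
        by_cases h : g = b <;> simp [renameN, h, degMu, degMu_renameN a b t]
  theorem degMuBag_renameNBag (a b : ℕ) : ∀ ts, degMuBag (renameNBag a b ts) = degMuBag ts
    | [] => by simp [renameNBag]
    | t :: ts => by
        simp [renameNBag, degMuBag, degMu_renameN a b t, degMuBag_renameNBag a b ts]
end

mutual
  theorem depths_renameN (a b : ℕ) : ∀ t, depths (renameN a b t) = depths t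
    | .var _ => by simp [renameN]
    | .lam _ t => by simp [renameN, depths, depths_renameN a b t]
    | .app t ts => by
        simp [renameN, depths, depths_renameN a b t, depthsBag_renameNBag a b ts]
    | .mu g e t => by
        by_cases h : g = b <;> simp [renameN, h, depths, depths_renameN a b t]
  theorem depthsBag_renameNBag (a b : ℕ) : ∀ ts, depthsBag (renameNBag a b ts) = depthsBag ts
    | [] => by simp [renameNBag]
    | t :: ts => by
        simp [renameNBag, depthsBag, depths_renameN a b t, depthsBag_renameNBag a b ts]
end

theorem degMuBag_append (l r : List Rt) : degMuBag (l ++ r) = degMuBag l + degMuBag r := by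
  induction l with
  | nil => simp [degMuBag]
  | cons t ts ih => simp [degMuBag, ih, add_assoc]

theorem depthsBag_append (l r : List Rt) : depthsBag (l ++ r) = depthsBag l + depthsBag r := by
  induction l with
  | nil => simp [depthsBag]
  | cons t ts ih => simp [depthsBag, ih, add_assoc]

/-- Relates the depth `d` of a bag before a ρ-step to its depth `d'` afterwards: the step lowers
the depth by at most one. That the depth never increases is not recorded, since the
comparison of measures only needs this bound. -/
def DepthRel (d d' : ℕ) : Prop := d ≤ d' + 1

theorem rel_depthRel_refl (M : Multiset ℕ) : Multiset.Rel DepthRel M M :=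
  Multiset.rel_refl_of_refl_on fun d _ => Nat.le_succ d

/-- A ρ-step yields a single term with one μ-abstraction fewer, whose bags correspond
bijectively to those of the source, each losing at most one level of depth. -/
theorem ctx_rho {t : Rt} {S : Multiset Rt} (h : Ctx BaseRho t S) :
    ∃ s, S = {s} ∧ degMu t = degMu s + 1 ∧ Multiset.Rel DepthRel (depths t) (depths s) := by
  induction h with
  | base h =>
    obtain ⟨g, a, b, e, t⟩ := h
    refine ⟨_, rfl, by simp [degMu, degMu_renameN], ?_⟩
    simp only [depths, depths_renameN, Multiset.map_map, Multiset.rel_map]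
    exact Multiset.rel_refl_of_refl_on fun d _ => le_refl (d + 2)
  | lam x _ ih =>
    obtain ⟨s, rfl, hd, hr⟩ := ih
    exact ⟨.lam x s, by simp, by simpa [degMu] using hd, by simpa [depths] using hr⟩
  | mu a b _ ih =>
    obtain ⟨s, rfl, hd, hr⟩ := ih
    refine ⟨.mu a b s, by simp, by simpa [degMu] using hd, ?_⟩
    simp only [depths, Multiset.rel_map]
    exact hr.mono fun d _ d' _ h => Nat.succ_le_succ h
  | appL bag _ ih =>
    obtain ⟨s, rfl, hd, hr⟩ := ih
    refine ⟨.app s bag, by simp, by simp only [degMu, hd]; omega, ?_⟩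
    simp only [depths]
    exact .cons (Nat.zero_le _) (hr.add (rel_depthRel_refl _))
  | appR t l r _ ih =>
    obtain ⟨s, rfl, hd, hr⟩ := ih
    refine ⟨.app t (l ++ s :: r), by simp, ?_, ?_⟩
    · simp only [degMu, degMuBag, degMuBag_append, hd]
      omega
    simp only [depths, depthsBag_append, depthsBag]
    exact .cons (Nat.zero_le _) ((rel_depthRel_refl _).add
      ((rel_depthRel_refl _).add (hr.add (rel_depthRel_refl _))))

/-- A bijective correspondence that never increases an entry gives the weak multiset order:
the entries that strictly decrease form the exchanged parts `X` and `Y`. -/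
theorem mlt_or_eq_of_rel {N M : Multiset ℕ} (h : Multiset.Rel (fun n m => m ≤ n) N M) :
    MLT M N ∨ M = N := by
  induction h with
  | zero => exact .inr rfl
  | @cons n m N M hle _ ih =>
    rcases hle.lt_or_eq with hlt | rfl
    · left
      rcases ih with ⟨X, Y, Z, -, rfl, rfl, hY⟩ | rfl
      · refine ⟨n ::ₘ X, m ::ₘ Y, Z, by simp, by simp, by simp, ?_⟩
        intro y hy
        rcases Multiset.mem_cons.1 hy with rfl | hy
        · exact ⟨n, by simp, hlt⟩
        · obtain ⟨x, hx, hyx⟩ := hY y hy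
          exact ⟨x, Multiset.mem_cons_of_mem hx, hyx⟩
      · refine ⟨{n}, {m}, M, by simp, ?_, ?_, by simpa using hlt⟩ <;>
          rw [add_comm, Multiset.singleton_add]
    · rcases ih with ⟨X, Y, Z, hX, rfl, rfl, hY⟩ | rfl
      · exact .inl ⟨X, Y, m ::ₘ Z, hX, by simp, by simp, hY⟩
      · exact .inr rfl

theorem msr_of_ctx_rho {t s : Rt} (hd : degMu t = degMu s + 1)
    (hr : Multiset.Rel DepthRel (depths t) (depths s)) :
    MLT (msr s) (msr t) ∨ msr s = msr t := by
  apply mlt_or_eq_of_rel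
  simp only [msr, Multiset.rel_map]
  refine hr.mono fun d _ d' _ h => ?_
  unfold DepthRel at h
  omega

/-- Proposition 2.10: a ρʳ-reduction step does not increase the multiset
measure `m`, and there are instances where equality holds (e.g. for `β ≠ η`,
`μγ.[α]μβ.[η]x →_{ρʳ} μγ.[η]x` with both measures the empty multiset). -/
theorem rhoStep_msr_nonincreasing :
    (∀ (t t' : Rt) (T : Finset Rt), StepRho t (insert t' T) →
        MLT (Rt.msr t') (Rt.msr t) ∨ Rt.msr t' = Rt.msr t) ∧
    (∀ g a b e x : ℕ, b ≠ e →
        StepRho (Rt.mu g a (Rt.mu b e (Rt.var x))) {Rt.mu g e (Rt.var x)} ∧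
        Rt.msr (Rt.mu g a (Rt.mu b e (Rt.var x))) = Rt.msr (Rt.mu g e (Rt.var x)) ∧
        Rt.msr (Rt.mu g e (Rt.var x)) = 0) := by
  refine ⟨fun t t' T h => ?_, fun g a b e x hbe => ⟨?_, ?_, ?_⟩⟩
  · obtain ⟨S, hS, hT⟩ := h
    obtain ⟨s, rfl, hd, hr⟩ := ctx_rho hS
    have ht : t' ∈ insert t' T := Finset.mem_insert_self _ _
    rw [hT] at ht
    obtain rfl : t' = s := by simpa using ht
    exact msr_of_ctx_rho hd hr
  · refine ⟨_, .base (.step g a b e (.var x)), ?_⟩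
    simp [renameN, hbe.symm]
  · simp [msr, depths]
  · simp [msr, depths]

end RLMu
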